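/- For all natural numbers j ≤ n, all i, k < ω, and every GLP_ω formula φ, the implication ⟨j⟩(φ ∧ Q_n^{i+k}(φ)) → Q_j^i(φ ∧ Q_n^k(φ)) is derivable in GLP_ω. -/

import Mathlib

/-- Formulas of polymodal provability logic GLP: propositional variables, ⊤,
Boolean connectives, and a modality `[ξ]` for each ordinal `ξ`. -/
inductive GLPFormula : Type 1 where
  | var : ℕ → GLPFormula
  | top : GLPFormula
  | neg : GLPFormula → GLPFormula
  | and : GLPFormula → GLPFormula → GLPFormula
  | imp : GLPFormula → GLPFormula → GLPFormula
  | box : Ordinal → GLPFormula → GLPFormula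

namespace GLPFormula

/-- `⟨ξ⟩φ` abbreviates `¬[ξ]¬φ`. -/
def dia (ξ : Ordinal) (φ : GLPFormula) : GLPFormula := neg (box ξ (neg φ))

/-- Biconditional, defined from the other connectives. -/
def biimp (φ ψ : GLPFormula) : GLPFormula := and (imp φ ψ) (imp ψ φ)

/-- The set of ordinals occurring as modality indices in a formula. -/
def mods : GLPFormula → Set Ordinal
  | var _ => ∅
  | top => ∅
  | neg φ => mods φ
  | and φ ψ => mods φ ∪ mods ψ
  | imp φ ψ => mods φ ∪ mods ψ
  | box ξ φ => insert ξ (mods φ)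

end GLPFormula

/-- A propositional tautology: true under every Boolean valuation that respects
the Boolean connectives (variables and boxed formulas are treated as atoms). -/
def IsTautology (φ : GLPFormula) : Prop :=
  ∀ v : GLPFormula → Bool,
    v GLPFormula.top = true →
    (∀ ψ, v ψ.neg = !v ψ) →
    (∀ ψ χ, v (ψ.and χ) = (v ψ && v χ)) →
    (∀ ψ χ, v (ψ.imp χ) = (!v ψ || v χ)) →
    v φ = true

/-- Derivability in GLP, with modality indices restricted to the set `S`
(`S = Set.univ` gives full GLP; `S = Set.Iio ω` gives GLP_ω). -/
inductive GLPProof (S : Set Ordinal) : GLPFormula → Prop where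
  | taut {φ} : φ.mods ⊆ S → IsTautology φ → GLPProof S φ
  | distr {ξ φ ψ} : ξ ∈ S → φ.mods ⊆ S → ψ.mods ⊆ S →
      GLPProof S ((GLPFormula.box ξ (φ.imp ψ)).imp
        ((GLPFormula.box ξ φ).imp (GLPFormula.box ξ ψ)))
  | trans {ξ φ} : ξ ∈ S → φ.mods ⊆ S →
      GLPProof S ((GLPFormula.box ξ φ).imp (GLPFormula.box ξ (GLPFormula.box ξ φ)))
  | lob {ξ φ} : ξ ∈ S → φ.mods ⊆ S →
      GLPProof S ((GLPFormula.box ξ ((GLPFormula.box ξ φ).imp φ)).imp (GLPFormula.box ξ φ))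
  | negIntro {ξ ζ φ} : ξ < ζ → ξ ∈ S → ζ ∈ S → φ.mods ⊆ S →
      GLPProof S ((GLPFormula.dia ζ φ).imp (GLPFormula.dia ξ φ))
  | mono {ξ ζ φ} : ξ < ζ → ξ ∈ S → ζ ∈ S → φ.mods ⊆ S →
      GLPProof S ((GLPFormula.dia ξ φ).imp (GLPFormula.box ζ (GLPFormula.dia ξ φ)))
  | mp {φ ψ} : GLPProof S (φ.imp ψ) → GLPProof S φ → GLPProof S ψ
  | nec {ξ φ} : ξ ∈ S → GLPProof S φ → GLPProof S (GLPFormula.box ξ φ)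

/-- Derivability in full GLP (modalities indexed by all ordinals). -/
def GLPProves (φ : GLPFormula) : Prop := GLPProof Set.univ φ

/-- Derivability in GLP_ω (modalities indexed by natural numbers). -/
def GLPomegaProves (φ : GLPFormula) : Prop := GLPProof (Set.Iio Ordinal.omega0) φ

/-- A GLP_ω formula: all modality indices are below ω. -/
def IsOmegaFormula (φ : GLPFormula) : Prop := φ.mods ⊆ Set.Iio Ordinal.omega0

/-- Conjunction of a finite list of formulas. -/
def listConj : List GLPFormula → GLPFormula
  | [] => GLPFormula.top
  | φ :: l => φ.and (listConj l)

/-- `SetProves S τ χ`: the set `τ` proves `χ`, i.e. `ψ₁ ∧ … ∧ ψₘ → χ` is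
derivable for some finite list of members of `τ`. -/
def SetProves (S : Set Ordinal) (τ : Set GLPFormula) (χ : GLPFormula) : Prop :=
  ∃ l : List GLPFormula, (∀ ψ ∈ l, ψ ∈ τ) ∧ GLPProof S ((listConj l).imp χ)

/-- The iterated consistency formulas: `Q n 0 φ = ⊤`, `Q n (k+1) φ = ⟨n⟩(φ ∧ Q n k φ)`. -/
def Q (n : Ordinal) : ℕ → GLPFormula → GLPFormula
  | 0, _ => GLPFormula.top
  | k + 1, φ => GLPFormula.dia n ((GLPFormula.and φ (Q n k φ)))

/-- `diaPow n k φ` is `⟨n⟩^k φ`, `k` iterated applications of `⟨n⟩`. -/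
def diaPow (n : Ordinal) : ℕ → GLPFormula → GLPFormula
  | 0, φ => φ
  | k + 1, φ => GLPFormula.dia n (diaPow n k φ)

/-- The formula corresponding to a worm, given as its list of modality indices:
`[] ↦ ⊤` and `γ :: A ↦ ⟨γ⟩A`. -/
def wormFormula : List Ordinal → GLPFormula
  | [] => GLPFormula.top
  | γ :: A => GLPFormula.dia γ (wormFormula A)

/-- The generalized `Q`-formula: `Q(⊤,φ) = ⊤`, `Q(⟨γ⟩A, φ) = ⟨γ⟩(φ ∧ Q(A,φ))`. -/
def QWorm : List Ordinal → GLPFormula → GLPFormula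
  | [], _ => GLPFormula.top
  | γ :: A, φ => GLPFormula.dia γ (GLPFormula.and φ (QWorm A φ))

/-!
Write `A_m` for `φ ∧ Q_n^m(φ)`. One application of `⟨n⟩` can be split off `Q_n^{i+1+k}(φ)` and
weakened to `⟨j⟩`, so that `Q_n^{i+1+k}(φ) → ⟨j⟩A_{i+k}`, and by induction on `i` the right-hand
side implies `Q_j^i(A_k)`. As `Q_n^m(φ)` gets weaker when `m` decreases, `A_{i+1+k}` also implies
`A_k`. Hence `A_{i+1+k} → A_k ∧ Q_j^i(A_k)`, and monotonicity of `⟨j⟩` gives the case `i + 1`.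
-/

theorem GLPFormula.mods_Q_subset {S : Set Ordinal} {n : Ordinal} {φ : GLPFormula}
    (hn : n ∈ S) (hφ : φ.mods ⊆ S) : ∀ k, (Q n k φ).mods ⊆ S
  | 0 => Set.empty_subset S
  | k + 1 => Set.insert_subset hn (Set.union_subset hφ (mods_Q_subset hn hφ k))

namespace GLPProof

open GLPFormula

variable {S : Set Ordinal} {ξ ζ n : Ordinal} {φ ψ χ : GLPFormula}

theorem mods_subset (h : GLPProof S φ) : φ.mods ⊆ S := by
  induction h with
  | taut hφ _ => exact hφ
  | mp _ _ ih _ => exact (Set.union_subset_iff.mp ih).2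
  | nec hξ _ ih => exact Set.insert_subset hξ ih
  | _ => simp_all [mods, dia, Set.insert_subset_iff]

theorem mods_subset_left (h : GLPProof S (φ.imp ψ)) : φ.mods ⊆ S :=
  (Set.union_subset_iff.mp h.mods_subset).1

theorem mods_subset_right (h : GLPProof S (φ.imp ψ)) : ψ.mods ⊆ S :=
  (Set.union_subset_iff.mp h.mods_subset).2

theorem imp_refl (hφ : φ.mods ⊆ S) : GLPProof S (φ.imp φ) :=
  taut (Set.union_subset hφ hφ) fun v _ _ _ himp => by simp [himp]

theorem imp_top (hφ : φ.mods ⊆ S) : GLPProof S (φ.imp top) :=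
  taut (Set.union_subset hφ (Set.empty_subset S)) fun v htop _ _ himp => by simp [himp, htop]

theorem and_imp_left (hφ : φ.mods ⊆ S) (hψ : ψ.mods ⊆ S) : GLPProof S ((φ.and ψ).imp φ) :=
  taut (Set.union_subset (Set.union_subset hφ hψ) hφ) fun v _ _ hand himp => by
    cases hv : v φ <;> simp [himp, hand, hv]

theorem and_imp_right (hφ : φ.mods ⊆ S) (hψ : ψ.mods ⊆ S) : GLPProof S ((φ.and ψ).imp ψ) :=
  taut (Set.union_subset (Set.union_subset hφ hψ) hψ) fun v _ _ hand himp => by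
    cases hv : v ψ <;> simp [himp, hand, hv]

theorem of_isTautology_imp (hψ : ψ.mods ⊆ S) (h : IsTautology (φ.imp ψ)) (hφ : GLPProof S φ) :
    GLPProof S ψ :=
  (taut (Set.union_subset hφ.mods_subset hψ) h).mp hφ

theorem of_isTautology_imp_imp (hχ : χ.mods ⊆ S) (h : IsTautology (φ.imp (ψ.imp χ)))
    (hφ : GLPProof S φ) (hψ : GLPProof S ψ) : GLPProof S χ :=
  (of_isTautology_imp (Set.union_subset hψ.mods_subset hχ) h hφ).mp hψ

theorem imp_trans (h₁ : GLPProof S (φ.imp ψ)) (h₂ : GLPProof S (ψ.imp χ)) :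
    GLPProof S (φ.imp χ) := by
  refine of_isTautology_imp_imp (Set.union_subset h₁.mods_subset_left h₂.mods_subset_right)
    (fun v _ _ _ himp => ?_) h₁ h₂
  cases hφ : v φ <;> cases hψ : v ψ <;> simp [himp, hφ, hψ]

theorem imp_and (h₁ : GLPProof S (φ.imp ψ)) (h₂ : GLPProof S (φ.imp χ)) :
    GLPProof S (φ.imp (ψ.and χ)) := by
  refine of_isTautology_imp_imp (Set.union_subset h₁.mods_subset_left
    (Set.union_subset h₁.mods_subset_right h₂.mods_subset_right))
    (fun v _ _ hand himp => ?_) h₁ h₂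
  cases hφ : v φ <;> cases hψ : v ψ <;> simp [himp, hand, hφ, hψ]

theorem and_imp_and_left (hφ : φ.mods ⊆ S) (h : GLPProof S (ψ.imp χ)) :
    GLPProof S ((φ.and ψ).imp (φ.and χ)) :=
  imp_and (and_imp_left hφ h.mods_subset_left)
    ((and_imp_right hφ h.mods_subset_left).imp_trans h)

theorem neg_imp_neg (h : GLPProof S (φ.imp ψ)) : GLPProof S (ψ.neg.imp φ.neg) := by
  refine of_isTautology_imp (Set.union_subset h.mods_subset_right h.mods_subset_left)
    (fun v _ hneg _ himp => ?_) h
  cases hφ : v φ <;> simp [himp, hneg, hφ]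

theorem box_imp_box (hξ : ξ ∈ S) (h : GLPProof S (φ.imp ψ)) :
    GLPProof S ((box ξ φ).imp (box ξ ψ)) :=
  (distr hξ h.mods_subset_left h.mods_subset_right).mp (nec hξ h)

theorem dia_imp_dia (hξ : ξ ∈ S) (h : GLPProof S (φ.imp ψ)) :
    GLPProof S ((dia ξ φ).imp (dia ξ ψ)) :=
  (box_imp_box hξ h.neg_imp_neg).neg_imp_neg

theorem dia_imp_dia_of_le (hle : ξ ≤ ζ) (hξ : ξ ∈ S) (hζ : ζ ∈ S) (hφ : φ.mods ⊆ S) :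
    GLPProof S ((dia ζ φ).imp (dia ξ φ)) := by
  rcases hle.eq_or_lt with rfl | hlt
  · exact imp_refl (Set.insert_subset hξ hφ)
  · exact negIntro hlt hξ hζ hφ

theorem Q_imp_Q_of_le (hn : n ∈ S) (hφ : φ.mods ⊆ S) {k m : ℕ} (hkm : k ≤ m) :
    GLPProof S ((Q n m φ).imp (Q n k φ)) := by
  induction k generalizing m with
  | zero => exact imp_top (mods_Q_subset hn hφ m)
  | succ k ih =>
    obtain ⟨m, rfl⟩ := Nat.exists_eq_add_of_le' hkm
    exact dia_imp_dia hn (and_imp_and_left hφ (ih (by lia)))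

end GLPProof

open GLPFormula GLPProof in
theorem dia_Q_to_iterated_Q_general {S : Set Ordinal} {j n : Ordinal} (hjn : j ≤ n) (hj : j ∈ S)
    (hn : n ∈ S) {φ : GLPFormula} (hφ : φ.mods ⊆ S) (i k : ℕ) :
    GLPProof S ((dia j (φ.and (Q n (i + k) φ))).imp (Q j i (φ.and (Q n k φ)))) := by
  have hA (m : ℕ) : (φ.and (Q n m φ)).mods ⊆ S := Set.union_subset hφ (mods_Q_subset hn hφ m)
  induction i with
  | zero => exact imp_top (Set.insert_subset hj (hA (0 + k)))
  | succ i ih =>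
    have lower_modality :
        GLPProof S ((Q n (i + 1 + k) φ).imp (dia j (φ.and (Q n (i + k) φ)))) := by
      rw [Nat.add_right_comm]
      exact dia_imp_dia_of_le hjn hj hn (hA (i + k))
    have imp_base : GLPProof S ((φ.and (Q n (i + 1 + k) φ)).imp (φ.and (Q n k φ))) :=
      and_imp_and_left hφ (Q_imp_Q_of_le hn hφ (Nat.le_add_left k (i + 1)))
    have imp_iterate :
        GLPProof S ((φ.and (Q n (i + 1 + k) φ)).imp (Q j i (φ.and (Q n k φ)))) :=
      (and_imp_right hφ lower_modality.mods_subset_left).imp_trans (lower_modality.imp_trans ih)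
    exact dia_imp_dia hj (imp_base.imp_and imp_iterate)

/-- For `j ≤ n`, `⟨j⟩(φ ∧ Q_n^{i+k}(φ)) → Q_j^i(φ ∧ Q_n^k(φ))` is derivable in GLP_ω. -/
theorem dia_Q_to_iterated_Q (j n : ℕ) (hjn : j ≤ n) (i k : ℕ)
    (φ : GLPFormula) (hφ : IsOmegaFormula φ) :
    GLPomegaProves ((GLPFormula.dia (j : Ordinal)
        (GLPFormula.and φ (Q (n : Ordinal) (i + k) φ))).imp
      (Q (j : Ordinal) i (GLPFormula.and φ (Q (n : Ordinal) k φ)))) :=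
  dia_Q_to_iterated_Q_general (Nat.cast_le.mpr hjn) (Ordinal.natCast_lt_omega0 j)
    (Ordinal.natCast_lt_omega0 n) hφ i k
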